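/- The union V₂₄ ∪ V₂₄′ of the binary tetrahedral group and the set {(±x±y)/√2 : x ≠ y ∈ {1,i,j,k}} is a subgroup of the unit quaternions of order 48 (the binary octahedral group), and V₂₄ is a normal subgroup of index 2 in it. -/

import Mathlib

open Quaternion

noncomputable section

def qi : ℍ[ℝ] := ⟨0, 1, 0, 0⟩
def qj : ℍ[ℝ] := ⟨0, 0, 1, 0⟩
def qk : ℍ[ℝ] := ⟨0, 0, 0, 1⟩

def V8 : Set ℍ[ℝ] := {1, -1, qi, -qi, qj, -qj, qk, -qk}

def V16 : Set ℍ[ℝ] :=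
  {q | ∃ a b c d : ℝ, a ∈ ({1, -1} : Set ℝ) ∧ b ∈ ({1, -1} : Set ℝ) ∧
    c ∈ ({1, -1} : Set ℝ) ∧ d ∈ ({1, -1} : Set ℝ) ∧ q = ⟨a / 2, b / 2, c / 2, d / 2⟩}

def V24 : Set ℍ[ℝ] := V8 ∪ V16

def omg : ℍ[ℝ] := ⟨1 / 2, 1 / 2, 1 / 2, 1 / 2⟩

def V24' : Set ℍ[ℝ] :=
  {q | ∃ x ∈ ({1, qi, qj, qk} : Set ℍ[ℝ]), ∃ y ∈ ({1, qi, qj, qk} : Set ℍ[ℝ]), x ≠ y ∧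
    ∃ s t : ℝ, s ∈ ({1, -1} : Set ℝ) ∧ t ∈ ({1, -1} : Set ℝ) ∧
      q = (Real.sqrt 2)⁻¹ • (s • x + t • y)}

/-!
The elements of `V24` are exactly the Hurwitz quaternions of norm one, so they form a group. The
unit quaternion `σ = (1 + i) / √2` is not in `V24`, because its real part is irrational, but its
square `i` is, and conjugation by `σ` sends `a + b i + c j + d k` to `a + b i - d j + c k` and hence
maps Hurwitz quaternions to Hurwitz quaternions. Therefore `V24 ∪ σ V24` is a group containing `V24`
with index two. It remains to see that `σ V24 = V24'`: the elements of `V24'` are the `q` of norm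
one for which `√2 q` is a Lipschitz quaternion, and multiplication by `1 + i` is a bijection from
the Hurwitz quaternions of norm one onto the Lipschitz quaternions of squared norm two.
-/

open Metric
open scoped Pointwise

section IndexTwo

variable {G : Type*} [Group G] {H K : Subgroup G} {g h : G}

theorem conj_mem_of_relIndex_eq_two (hHK : H ≤ K) (hindex : H.relIndex K = 2) (hg : g ∈ K)
    (hh : h ∈ H) : g * h * g⁻¹ ∈ H :=
  (Subgroup.normal_subgroupOf_iff hHK).1 (Subgroup.normal_of_index_eq_two hindex) h g hh hg

theorem coe_eq_union_smul_of_relIndex_eq_two (hHK : H ≤ K) (hindex : H.relIndex K = 2) (hg : g ∈ K)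
    (hgH : g ∉ H) :
    (K : Set G) = (H : Set G) ∪ g • (H : Set G) := by
  have inv_mul_mem_iff (x : G) (hx : x ∈ K) : g⁻¹ * x ∈ H ↔ x ∉ H := by
    simpa [Subgroup.mem_subgroupOf, hgH] using
      Subgroup.mul_mem_iff_of_index_two hindex (a := ⟨g, hg⟩⁻¹) (b := ⟨x, hx⟩)
  ext x
  simp only [Set.mem_union, SetLike.mem_coe, Set.mem_smul_set_iff_inv_smul_mem, smul_eq_mul]
  constructor
  · intro hx
    rw [inv_mul_mem_iff x hx]
    exact em _
  · rintro (hx | hx)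
    · exact hHK hx
    · simpa using K.mul_mem hg (hHK hx)

/-- The subgroup `H ∪ gH` generated by a subgroup `H` together with an element `g` that conjugates
`H` into itself and whose square lies in `H`; the coset `gH` is encoded as `{x | g⁻¹ * x ∈ H}`. -/
def adjoinSqrt (H : Subgroup G) (g : G) (hconj : ∀ h ∈ H, g * h * g⁻¹ ∈ H)
    (hsq : g * g ∈ H) : Subgroup G where
  carrier := {x | x ∈ H ∨ g⁻¹ * x ∈ H}
  one_mem' := Or.inl H.one_mem
  mul_mem' := by
    have conj_inv_mem : ∀ h ∈ H, g⁻¹ * h * g ∈ H := fun h hh ↦ by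
      simpa [mul_assoc] using H.mul_mem (H.mul_mem (H.inv_mem hsq) (hconj h hh)) hsq
    rintro x y (hx | hx) (hy | hy)
    · exact Or.inl (H.mul_mem hx hy)
    · exact Or.inr (by simpa [mul_assoc] using H.mul_mem (conj_inv_mem x hx) hy)
    · exact Or.inr (by simpa [mul_assoc] using H.mul_mem hx hy)
    · exact Or.inl (by simpa [mul_assoc] using H.mul_mem (H.mul_mem (hconj _ hx) hsq) hy)
  inv_mem' := by
    rintro x (hx | hx)
    · exact Or.inl (H.inv_mem hx)
    · refine Or.inr ?_
      simpa [mul_assoc] using H.mul_mem (H.inv_mem hsq) (hconj _ (H.inv_mem hx))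

variable (hconj : ∀ h ∈ H, g * h * g⁻¹ ∈ H) (hsq : g * g ∈ H)

theorem mem_adjoinSqrt {x : G} : x ∈ adjoinSqrt H g hconj hsq ↔ x ∈ H ∨ g⁻¹ * x ∈ H :=
  Iff.rfl

theorem le_adjoinSqrt : H ≤ adjoinSqrt H g hconj hsq := fun _ ↦ Or.inl

theorem relIndex_adjoinSqrt (hg : g ∉ H) : H.relIndex (adjoinSqrt H g hconj hsq) = 2 := by
  exact Subgroup.relIndex_eq_two_iff_exists_notMem_and'.2
    ⟨g⁻¹, Subgroup.inv_mem _ (Or.inr (by simp)), by simpa using hg, fun x hx ↦ hx.symm⟩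

end IndexTwo

@[simp] theorem re_qi : qi.re = 0 := rfl
@[simp] theorem imI_qi : qi.imI = 1 := rfl
@[simp] theorem imJ_qi : qi.imJ = 0 := rfl
@[simp] theorem imK_qi : qi.imK = 0 := rfl
@[simp] theorem re_qj : qj.re = 0 := rfl
@[simp] theorem imI_qj : qj.imI = 0 := rfl
@[simp] theorem imJ_qj : qj.imJ = 1 := rfl
@[simp] theorem imK_qj : qj.imK = 0 := rfl
@[simp] theorem re_qk : qk.re = 0 := rfl
@[simp] theorem imI_qk : qk.imI = 0 := rfl
@[simp] theorem imJ_qk : qk.imJ = 0 := rfl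
@[simp] theorem imK_qk : qk.imK = 1 := rfl

theorem norm_eq_one_iff_sum_sq {q : ℍ[ℝ]} :
    ‖q‖ = 1 ↔ q.re ^ 2 + q.imI ^ 2 + q.imJ ^ 2 + q.imK ^ 2 = 1 := by
  rw [← normSq_def', normSq_eq_norm_mul_self, ← sq,
    pow_eq_one_iff_of_nonneg (norm_nonneg q) two_ne_zero]

theorem mem_one_neg_one_iff_sq_eq_one {x : ℝ} : x ∈ ({1, -1} : Set ℝ) ↔ x ^ 2 = 1 := by
  simp

theorem intCast_mem_one_neg_one {a : ℤ} (ha : a ^ 2 = 1) : (a : ℝ) ∈ ({1, -1} : Set ℝ) :=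
  mem_one_neg_one_iff_sq_eq_one.2 (mod_cast ha)

section SumFourSquares

variable {a b c d : ℤ}

theorem eq_zero_or_sq_eq_one_of_sq_lt_four (ha : a ^ 2 < 4) : a = 0 ∨ a ^ 2 = 1 := by
  obtain ⟨h₁, h₂⟩ := abs_lt.1 (abs_lt_of_sq_lt_sq (b := (2 : ℤ)) (by simpa using ha) zero_le_two)
  interval_cases a <;> simp

theorem cases_of_sum_four_sq_eq_one (h : a ^ 2 + b ^ 2 + c ^ 2 + d ^ 2 = 1) :
    (a ^ 2 = 1 ∧ b = 0 ∧ c = 0 ∧ d = 0) ∨ (b ^ 2 = 1 ∧ a = 0 ∧ c = 0 ∧ d = 0) ∨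
    (c ^ 2 = 1 ∧ a = 0 ∧ b = 0 ∧ d = 0) ∨ (d ^ 2 = 1 ∧ a = 0 ∧ b = 0 ∧ c = 0) := by
  have ha := eq_zero_or_sq_eq_one_of_sq_lt_four (a := a) (by nlinarith)
  have hb := eq_zero_or_sq_eq_one_of_sq_lt_four (a := b) (by nlinarith)
  have hc := eq_zero_or_sq_eq_one_of_sq_lt_four (a := c) (by nlinarith)
  have hd := eq_zero_or_sq_eq_one_of_sq_lt_four (a := d) (by nlinarith)
  grind

theorem cases_of_sum_four_sq_eq_two (h : a ^ 2 + b ^ 2 + c ^ 2 + d ^ 2 = 2) :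
    (a ^ 2 = 1 ∧ b ^ 2 = 1 ∧ c = 0 ∧ d = 0) ∨ (a ^ 2 = 1 ∧ c ^ 2 = 1 ∧ b = 0 ∧ d = 0) ∨
    (a ^ 2 = 1 ∧ d ^ 2 = 1 ∧ b = 0 ∧ c = 0) ∨ (b ^ 2 = 1 ∧ c ^ 2 = 1 ∧ a = 0 ∧ d = 0) ∨
    (b ^ 2 = 1 ∧ d ^ 2 = 1 ∧ a = 0 ∧ c = 0) ∨ (c ^ 2 = 1 ∧ d ^ 2 = 1 ∧ a = 0 ∧ b = 0) := by
  have ha := eq_zero_or_sq_eq_one_of_sq_lt_four (a := a) (by nlinarith)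
  have hb := eq_zero_or_sq_eq_one_of_sq_lt_four (a := b) (by nlinarith)
  have hc := eq_zero_or_sq_eq_one_of_sq_lt_four (a := c) (by nlinarith)
  have hd := eq_zero_or_sq_eq_one_of_sq_lt_four (a := d) (by nlinarith)
  grind

end SumFourSquares

/-- The Lipschitz quaternions: those with integer coordinates. -/
def lipschitzLattice : AddSubgroup ℍ[ℝ] where
  carrier := {q | ∃ a b c d : ℤ, q.re = a ∧ q.imI = b ∧ q.imJ = c ∧ q.imK = d}
  zero_mem' := ⟨0, 0, 0, 0, by simp⟩
  add_mem' := by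
    rintro p q ⟨a, b, c, d, ha, hb, hc, hd⟩ ⟨a', b', c', d', ha', hb', hc', hd'⟩
    exact ⟨a + a', b + b', c + c', d + d', by simp [*]⟩
  neg_mem' := by
    rintro q ⟨a, b, c, d, ha, hb, hc, hd⟩
    exact ⟨-a, -b, -c, -d, by simp [*]⟩

/-- The Hurwitz quaternions, whose coordinates are all integers or all halves of odd integers. They
are encoded as the integral combinations `n ω + b i + c j + d k` with `ω = (1 + i + j + k) / 2`. -/
def hurwitzOrder : Subring ℍ[ℝ] where
  carrier := {q | ∃ n b c d : ℤ,
    2 * q.re = n ∧ q.imI = q.re + b ∧ q.imJ = q.re + c ∧ q.imK = q.re + d}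
  zero_mem' := ⟨0, 0, 0, 0, by simp⟩
  one_mem' := ⟨2, -1, -1, -1, by simp⟩
  add_mem' := by
    rintro p q ⟨n, b, c, d, hn, hb, hc, hd⟩ ⟨n', b', c', d', hn', hb', hc', hd'⟩
    refine ⟨n + n', b + b', c + c', d + d', ?_, ?_, ?_, ?_⟩ <;>
    · simp only [re_add, imI_add, imJ_add, imK_add, hb, hc, hd, hb', hc', hd']
      push_cast [← hn, ← hn']
      ring
  neg_mem' := by
    rintro q ⟨n, b, c, d, hn, hb, hc, hd⟩
    refine ⟨-n, -b, -c, -d, ?_, ?_, ?_, ?_⟩ <;>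
    · simp only [re_neg, imI_neg, imJ_neg, imK_neg, hb, hc, hd]
      push_cast [← hn]
      ring
  -- The witnesses are the coefficients of `p * q` on `ω`, `i`, `j`, `k`.
  mul_mem' := by
    rintro p q ⟨n, b, c, d, hn, hb, hc, hd⟩ ⟨n', b', c', d', hn', hb', hc', hd'⟩
    let t := n * n' + (b * b' + c * c' + d * d')
    refine ⟨-n * n' - n * (b' + c' + d') - n' * (b + c + d) - 2 * (b * b' + c * c' + d * d'),
      n * (b' + d') + n' * (b + c) + c * d' - d * c' + t,
      n * (c' + b') + n' * (c + d) + d * b' - b * d' + t,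
      n * (d' + c') + n' * (d + b) + b * c' - c * b' + t, ?_, ?_, ?_, ?_⟩ <;>
    · simp only [t, re_mul, imI_mul, imJ_mul, imK_mul, hb, hc, hd, hb', hc', hd']
      push_cast [← hn, ← hn']
      ring

theorem basis_subset_lipschitzLattice : {1, qi, qj, qk} ⊆ (lipschitzLattice : Set ℍ[ℝ]) := by
  rintro _ (rfl | rfl | rfl | rfl)
  · exact ⟨1, 0, 0, 0, by simp⟩
  · exact ⟨0, 1, 0, 0, by simp⟩
  · exact ⟨0, 0, 1, 0, by simp⟩
  · exact ⟨0, 0, 0, 1, by simp⟩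

theorem smul_mem_lipschitzLattice {q : ℍ[ℝ]} (hq : q ∈ lipschitzLattice) {s : ℝ}
    (hs : s ∈ ({1, -1} : Set ℝ)) : s • q ∈ lipschitzLattice := by
  rcases hs with rfl | rfl <;> simpa

theorem mem_V8_iff_exists_smul {q : ℍ[ℝ]} :
    q ∈ V8 ↔ ∃ x ∈ ({1, qi, qj, qk} : Set ℍ[ℝ]), ∃ s ∈ ({1, -1} : Set ℝ), q = s • x := by
  simp [V8, or_assoc]

theorem mem_V8_iff {q : ℍ[ℝ]} : q ∈ V8 ↔ ‖q‖ = 1 ∧ q ∈ lipschitzLattice := by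
  rw [mem_V8_iff_exists_smul]
  constructor
  · rintro ⟨x, hx, s, hs, rfl⟩
    refine ⟨?_, smul_mem_lipschitzLattice (basis_subset_lipschitzLattice hx) hs⟩
    rw [norm_eq_one_iff_sum_sq]
    rcases hx with rfl | rfl | rfl | rfl <;> simpa using hs
  · rintro ⟨hnorm, a, b, c, d, ha, hb, hc, hd⟩
    rw [norm_eq_one_iff_sum_sq, ha, hb, hc, hd] at hnorm
    norm_cast at hnorm
    rcases cases_of_sum_four_sq_eq_one hnorm with
      ⟨h, rfl, rfl, rfl⟩ | ⟨h, rfl, rfl, rfl⟩ | ⟨h, rfl, rfl, rfl⟩ | ⟨h, rfl, rfl, rfl⟩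
    · exact ⟨1, by simp, _, intCast_mem_one_neg_one h, by ext <;> simp [*]⟩
    · exact ⟨qi, by simp, _, intCast_mem_one_neg_one h, by ext <;> simp [*]⟩
    · exact ⟨qj, by simp, _, intCast_mem_one_neg_one h, by ext <;> simp [*]⟩
    · exact ⟨qk, by simp, _, intCast_mem_one_neg_one h, by ext <;> simp [*]⟩

theorem mem_V16_iff {q : ℍ[ℝ]} : q ∈ V16 ↔ (2 * q.re) ^ 2 = 1 ∧ (2 * q.imI) ^ 2 = 1 ∧
    (2 * q.imJ) ^ 2 = 1 ∧ (2 * q.imK) ^ 2 = 1 := by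
  simp only [← mem_one_neg_one_iff_sq_eq_one]
  constructor
  · rintro ⟨a, b, c, d, ha, hb, hc, hd, rfl⟩
    simp only [mul_div_cancel₀ _ (two_ne_zero' ℝ)]
    exact ⟨ha, hb, hc, hd⟩
  · rintro ⟨ha, hb, hc, hd⟩
    exact ⟨_, _, _, _, ha, hb, hc, hd, by ext <;> simp⟩

theorem mem_lipschitzLattice_or_mem_V16 {q : ℍ[ℝ]} (hq : q ∈ hurwitzOrder) (hnorm : ‖q‖ = 1) :
    q ∈ lipschitzLattice ∨ q ∈ V16 := by
  obtain ⟨n, b, c, d, hn, hb, hc, hd⟩ := hq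
  rcases Int.even_or_odd' n with ⟨m, rfl | rfl⟩
  · have hre : q.re = m := by push_cast at hn; linarith
    exact Or.inl ⟨m, m + b, m + c, m + d, by simp [*]⟩
  · right
    rw [norm_eq_one_iff_sum_sq] at hnorm
    push_cast at hn
    have hre : 2 * q.re = (2 * m + 1 : ℤ) := by push_cast; linarith
    have hI : 2 * q.imI = (2 * (m + b) + 1 : ℤ) := by push_cast; linarith
    have hJ : 2 * q.imJ = (2 * (m + c) + 1 : ℤ) := by push_cast; linarith
    have hK : 2 * q.imK = (2 * (m + d) + 1 : ℤ) := by push_cast; linarith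
    have hsum : (2 * q.re) ^ 2 + (2 * q.imI) ^ 2 + (2 * q.imJ) ^ 2 + (2 * q.imK) ^ 2 = 4 := by
      linarith
    rw [hre, hI, hJ, hK] at hsum
    rw [mem_V16_iff, hre, hI, hJ, hK]
    norm_cast at hsum ⊢
    have one_le_odd_sq (x : ℤ) : 1 ≤ (2 * x + 1) ^ 2 :=
      Int.add_one_le_of_lt (sq_pos_of_ne_zero (by lia))
    have ha' := one_le_odd_sq m
    have hb' := one_le_odd_sq (m + b)
    have hc' := one_le_odd_sq (m + c)
    have hd' := one_le_odd_sq (m + d)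
    refine ⟨?_, ?_, ?_, ?_⟩ <;> linarith

theorem lipschitzLattice_le_hurwitzOrder : lipschitzLattice ≤ hurwitzOrder.toAddSubgroup := by
  rintro q ⟨a, b, c, d, ha, hb, hc, hd⟩
  exact ⟨2 * a, b - a, c - a, d - a, by simp [*]⟩

theorem V16_subset_hurwitzOrder : V16 ⊆ hurwitzOrder := by
  rintro _ ⟨a, b, c, d, ha, hb, hc, hd, rfl⟩
  have eq_add_int {x : ℝ} (hx : x ∈ ({1, -1} : Set ℝ)) : ∃ k : ℤ, x / 2 = a / 2 + k := by
    rcases ha with rfl | rfl <;> rcases hx with rfl | rfl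
    exacts [⟨0, by simp⟩, ⟨-1, by norm_num⟩, ⟨1, by norm_num⟩, ⟨0, by simp⟩]
  obtain ⟨n, hn⟩ : ∃ n : ℤ, 2 * (a / 2) = n := by
    rcases ha with rfl | rfl
    exacts [⟨1, by norm_num⟩, ⟨-1, by norm_num⟩]
  obtain ⟨k, hk⟩ := eq_add_int hb
  obtain ⟨l, hl⟩ := eq_add_int hc
  obtain ⟨m, hm⟩ := eq_add_int hd
  exact ⟨n, k, l, m, hn, hk, hl, hm⟩

theorem mem_V24_iff {q : ℍ[ℝ]} : q ∈ V24 ↔ ‖q‖ = 1 ∧ q ∈ hurwitzOrder := by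
  constructor
  · rintro (hq | hq)
    · rw [mem_V8_iff] at hq
      exact ⟨hq.1, lipschitzLattice_le_hurwitzOrder hq.2⟩
    · refine ⟨?_, V16_subset_hurwitzOrder hq⟩
      rw [mem_V16_iff] at hq
      rw [norm_eq_one_iff_sum_sq]
      linarith
  · rintro ⟨hnorm, hq⟩
    exact (mem_lipschitzLattice_or_mem_V16 hq hnorm).imp_left fun h ↦ mem_V8_iff.2 ⟨hnorm, h⟩

theorem ncard_V8 : V8.ncard = 8 := by
  unfold V8
  iterate 7 rw [Set.ncard_insert_of_notMem (by norm_num [Quaternion.ext_iff])]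
  simp

theorem ncard_V16 : V16.ncard = 16 := by
  let A : Set ℝ := {x | (2 * x) ^ 2 = 1}
  have hA : A = {1 / 2, -1 / 2} := by
    ext x
    simp only [A, Set.mem_ofPred_eq, sq_eq_one_iff, Set.mem_insert_iff, Set.mem_singleton_iff]
    grind
  have hV16 : V16 = (Quaternion.equivProd ℝ).symm '' (A ×ˢ A ×ˢ A ×ˢ A) := by
    rw [Equiv.image_symm_eq_preimage]
    exact Set.ext fun _ ↦ mem_V16_iff
  have hcard : A.ncard = 2 := by rw [hA, Set.ncard_pair (by norm_num)]
  rw [hV16, Set.ncard_image_of_injective _ (Equiv.injective _)]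
  simp [Set.ncard_prod, hcard]

theorem disjoint_V8_V16 : Disjoint V8 V16 := by
  rw [Set.disjoint_left]
  intro q hq
  rw [mem_V16_iff]
  rcases hq with rfl | rfl | rfl | rfl | rfl | rfl | rfl | rfl <;> norm_num

theorem ncard_V24 : V24.ncard = 24 := by
  have hV8 : V8.Finite := Set.finite_of_ncard_ne_zero (by simp [ncard_V8])
  have hV16 : V16.Finite := Set.finite_of_ncard_ne_zero (by simp [ncard_V16])
  rw [V24, Set.ncard_union_eq disjoint_V8_V16 hV8 hV16, ncard_V8, ncard_V16]

theorem normSq_smul_add_smul {x y : ℍ[ℝ]} (hx : x ∈ ({1, qi, qj, qk} : Set ℍ[ℝ]))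
    (hy : y ∈ ({1, qi, qj, qk} : Set ℍ[ℝ])) (hxy : x ≠ y) (s t : ℝ) :
    normSq (s • x + t • y) = s ^ 2 + t ^ 2 := by
  rw [normSq_def']
  rcases hx with rfl | rfl | rfl | rfl <;> rcases hy with rfl | rfl | rfl | rfl <;>
    first
    | exact absurd rfl hxy
    | simp [add_comm]

theorem exists_eq_smul_add_smul {p : ℍ[ℝ]} (hp : p ∈ lipschitzLattice) (hnorm : normSq p = 2) :
    ∃ x ∈ ({1, qi, qj, qk} : Set ℍ[ℝ]), ∃ y ∈ ({1, qi, qj, qk} : Set ℍ[ℝ]), x ≠ y ∧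
      ∃ s t : ℝ, s ∈ ({1, -1} : Set ℝ) ∧ t ∈ ({1, -1} : Set ℝ) ∧ p = s • x + t • y := by
  obtain ⟨a, b, c, d, ha, hb, hc, hd⟩ := hp
  rw [normSq_def', ha, hb, hc, hd] at hnorm
  norm_cast at hnorm
  suffices ∃ x ∈ ({1, qi, qj, qk} : Set ℍ[ℝ]), ∃ y ∈ ({1, qi, qj, qk} : Set ℍ[ℝ]), x ≠ y ∧
      ∃ m n : ℤ, m ^ 2 = 1 ∧ n ^ 2 = 1 ∧ p = (m : ℝ) • x + (n : ℝ) • y by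
    obtain ⟨x, hx, y, hy, hxy, m, n, hm, hn, heq⟩ := this
    exact ⟨x, hx, y, hy, hxy, m, n, intCast_mem_one_neg_one hm, intCast_mem_one_neg_one hn, heq⟩
  rcases cases_of_sum_four_sq_eq_two hnorm with ⟨h, h', rfl, rfl⟩ | ⟨h, h', rfl, rfl⟩ |
    ⟨h, h', rfl, rfl⟩ | ⟨h, h', rfl, rfl⟩ | ⟨h, h', rfl, rfl⟩ | ⟨h, h', rfl, rfl⟩
  · refine ⟨1, by simp, qi, by simp, ?_, a, b, h, h', ?_⟩ <;> simp [Quaternion.ext_iff, *]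
  · refine ⟨1, by simp, qj, by simp, ?_, a, c, h, h', ?_⟩ <;> simp [Quaternion.ext_iff, *]
  · refine ⟨1, by simp, qk, by simp, ?_, a, d, h, h', ?_⟩ <;> simp [Quaternion.ext_iff, *]
  · refine ⟨qi, by simp, qj, by simp, ?_, b, c, h, h', ?_⟩ <;> simp [Quaternion.ext_iff, *]
  · refine ⟨qi, by simp, qk, by simp, ?_, b, d, h, h', ?_⟩ <;> simp [Quaternion.ext_iff, *]
  · refine ⟨qj, by simp, qk, by simp, ?_, c, d, h, h', ?_⟩ <;> simp [Quaternion.ext_iff, *]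

theorem normSq_sqrt_two_smul {q : ℍ[ℝ]} (hq : ‖q‖ = 1) : normSq (√2 • q) = 2 := by
  rw [normSq_smul, Real.sq_sqrt zero_le_two, normSq_eq_norm_mul_self, hq, one_mul, mul_one]

theorem mem_V24'_iff {q : ℍ[ℝ]} : q ∈ V24' ↔ ‖q‖ = 1 ∧ √2 • q ∈ lipschitzLattice := by
  have eq_inv_smul_iff {p : ℍ[ℝ]} : q = (√2)⁻¹ • p ↔ √2 • q = p :=
    eq_inv_smul_iff₀ (Real.sqrt_ne_zero'.2 (zero_lt_two' ℝ))
  constructor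
  · rintro ⟨x, hx, y, hy, hxy, s, t, hs, ht, hq⟩
    rw [eq_inv_smul_iff] at hq
    have hnorm := normSq_smul_add_smul hx hy hxy s t
    rw [← hq, normSq_smul, Real.sq_sqrt zero_le_two, mem_one_neg_one_iff_sq_eq_one.1 hs,
      mem_one_neg_one_iff_sq_eq_one.1 ht, normSq_def'] at hnorm
    refine ⟨norm_eq_one_iff_sum_sq.2 (by linarith), hq ▸ ?_⟩
    exact add_mem (smul_mem_lipschitzLattice (basis_subset_lipschitzLattice hx) hs)
      (smul_mem_lipschitzLattice (basis_subset_lipschitzLattice hy) ht)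
  · rintro ⟨hnorm, hq⟩
    simpa only [V24', Set.mem_ofPred_eq, eq_inv_smul_iff] using
      exists_eq_smul_add_smul hq (normSq_sqrt_two_smul hnorm)

/-- The unit quaternion `(1 + i) / √2`, a square root of `i`. -/
def sqrtQi : sphere (0 : ℍ[ℝ]) 1 :=
  ⟨(√2)⁻¹ • (1 + qi), by
    rw [mem_sphere_zero_iff_norm, norm_eq_one_iff_sum_sq]
    norm_num⟩

theorem coe_sqrtQi : (sqrtQi : ℍ[ℝ]) = (√2)⁻¹ • (1 + qi) := rfl

theorem inv_sqrt_two_mul_self : (√2)⁻¹ * (√2)⁻¹ = 2⁻¹ := by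
  rw [← mul_inv, Real.mul_self_sqrt zero_le_two]

theorem coe_inv_sqrtQi : ((sqrtQi⁻¹ : sphere (0 : ℍ[ℝ]) 1) : ℍ[ℝ]) = (√2)⁻¹ • (1 - qi) := by
  refine inv_eq_of_mul_eq_one_right ?_
  rw [coe_sqrtQi, smul_mul_smul_comm, inv_sqrt_two_mul_self]
  ext <;> norm_num

theorem sqrtQi_mul_self : ((sqrtQi * sqrtQi : sphere (0 : ℍ[ℝ]) 1) : ℍ[ℝ]) = qi := by
  rw [Metric.unitSphere.coe_mul, coe_sqrtQi, smul_mul_smul_comm, inv_sqrt_two_mul_self]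
  ext <;> norm_num

theorem one_add_qi_mul (q : ℍ[ℝ]) :
    (1 + qi) * q = ⟨q.re - q.imI, q.re + q.imI, q.imJ - q.imK, q.imJ + q.imK⟩ := by
  ext <;> simp <;> ring

theorem half_smul_one_sub_qi_mul (q : ℍ[ℝ]) :
    (2⁻¹ : ℝ) • ((1 - qi) * q) =
      ⟨(q.re + q.imI) / 2, (q.imI - q.re) / 2, (q.imJ + q.imK) / 2, (q.imK - q.imJ) / 2⟩ := by
  ext <;> simp <;> ring

theorem coe_conj_sqrtQi (q : sphere (0 : ℍ[ℝ]) 1) :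
    ((sqrtQi * q * sqrtQi⁻¹ : sphere (0 : ℍ[ℝ]) 1) : ℍ[ℝ]) =
      ⟨(q : ℍ[ℝ]).re, (q : ℍ[ℝ]).imI, -(q : ℍ[ℝ]).imK, (q : ℍ[ℝ]).imJ⟩ := by
  rw [Metric.unitSphere.coe_mul, Metric.unitSphere.coe_mul, coe_inv_sqrtQi, coe_sqrtQi,
    smul_mul_assoc, smul_mul_smul_comm, inv_sqrt_two_mul_self]
  ext <;> simp <;> ring

theorem one_add_qi_mul_mem_lipschitzLattice {q : ℍ[ℝ]} (hq : q ∈ hurwitzOrder) :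
    (1 + qi) * q ∈ lipschitzLattice := by
  obtain ⟨n, b, c, d, hn, hb, hc, hd⟩ := hq
  rw [one_add_qi_mul, hb, hc, hd]
  refine ⟨-b, n + b, c - d, n + c + d, ?_, ?_, ?_, ?_⟩ <;>
  · push_cast [← hn]
    ring

theorem even_sum_of_even_sum_sq {a b c d : ℤ} (h : Even (a ^ 2 + b ^ 2 + c ^ 2 + d ^ 2)) :
    Even (a + b + c + d) := by
  simpa [Int.even_add, Int.even_pow] using h

theorem half_smul_one_sub_qi_mul_mem_hurwitzOrder {p : ℍ[ℝ]} (hp : p ∈ lipschitzLattice)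
    (hnorm : normSq p = 2) : (2⁻¹ : ℝ) • ((1 - qi) * p) ∈ hurwitzOrder := by
  obtain ⟨a, b, c, d, ha, hb, hc, hd⟩ := hp
  rw [normSq_def', ha, hb, hc, hd] at hnorm
  norm_cast at hnorm
  obtain ⟨m, hm⟩ := even_sum_of_even_sum_sq (hnorm ▸ even_two)
  have hd' : (d : ℝ) = m + m - a - b - c := by
    rw [eq_sub_iff_add_eq', eq_sub_iff_add_eq', eq_sub_iff_add_eq', ← add_assoc, ← add_assoc]
    exact_mod_cast hm
  rw [half_smul_one_sub_qi_mul, ha, hb, hc, hd, hd']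
  refine ⟨a + b, -a, m - a - b, m - a - b - c, ?_, ?_, ?_, ?_⟩ <;>
  · push_cast
    ring

/-- The binary tetrahedral group, realised as the group of Hurwitz quaternions of norm one. -/
def binaryTetrahedral : Subgroup (sphere (0 : ℍ[ℝ]) 1) where
  carrier := {q | (q : ℍ[ℝ]) ∈ hurwitzOrder}
  one_mem' := hurwitzOrder.one_mem
  mul_mem' := hurwitzOrder.mul_mem
  inv_mem' := by
    rintro q hq
    have hinv : ((q⁻¹ : sphere (0 : ℍ[ℝ]) 1) : ℍ[ℝ]) = star (q : ℍ[ℝ]) := by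
      rw [Metric.unitSphere.coe_inv, Quaternion.inv_def, normSq_eq_norm_mul_self,
        norm_eq_of_mem_sphere]
      simp
    change _ ∈ hurwitzOrder
    rw [hinv]
    obtain ⟨n, b, c, d, hn, hb, hc, hd⟩ := hq
    refine ⟨n, -n - b, -n - c, -n - d, ?_, ?_, ?_, ?_⟩ <;>
    · simp only [re_star, imI_star, imJ_star, imK_star, hb, hc, hd]
      push_cast [← hn]
      ring

theorem mem_binaryTetrahedral {q : sphere (0 : ℍ[ℝ]) 1} :
    q ∈ binaryTetrahedral ↔ (q : ℍ[ℝ]) ∈ hurwitzOrder :=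
  Iff.rfl

theorem image_coe_binaryTetrahedral :
    ((↑) : sphere (0 : ℍ[ℝ]) 1 → ℍ[ℝ]) '' binaryTetrahedral = V24 := by
  ext q
  simp [mem_V24_iff, mem_binaryTetrahedral, and_comm]

theorem conj_sqrtQi_mem_binaryTetrahedral {q : sphere (0 : ℍ[ℝ]) 1} (hq : q ∈ binaryTetrahedral) :
    sqrtQi * q * sqrtQi⁻¹ ∈ binaryTetrahedral := by
  rw [mem_binaryTetrahedral, coe_conj_sqrtQi]
  obtain ⟨n, b, c, d, hn, hb, hc, hd⟩ := hq
  refine ⟨n, b, -n - d, c, hn, hb, ?_, hc⟩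
  push_cast [← hn, hd]
  ring

theorem sqrtQi_mul_self_mem_binaryTetrahedral : sqrtQi * sqrtQi ∈ binaryTetrahedral := by
  rw [mem_binaryTetrahedral, sqrtQi_mul_self]
  exact lipschitzLattice_le_hurwitzOrder (basis_subset_lipschitzLattice (by simp))

theorem sqrtQi_notMem_binaryTetrahedral : sqrtQi ∉ binaryTetrahedral := by
  rintro ⟨n, -, -, -, hn, -⟩
  refine irrational_sqrt_two.ne_int n (Eq.trans ?_ hn)
  rw [coe_sqrtQi]
  simp [← div_eq_mul_inv, Real.div_sqrt]

/-- The binary octahedral group, obtained from the binary tetrahedral group by adjoining the square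
root `(1 + i) / √2` of `i`. -/
def binaryOctahedral : Subgroup (sphere (0 : ℍ[ℝ]) 1) :=
  adjoinSqrt binaryTetrahedral sqrtQi (fun _ ↦ conj_sqrtQi_mem_binaryTetrahedral)
    sqrtQi_mul_self_mem_binaryTetrahedral

theorem binaryTetrahedral_le_binaryOctahedral : binaryTetrahedral ≤ binaryOctahedral :=
  le_adjoinSqrt _ _

theorem relIndex_binaryTetrahedral_binaryOctahedral :
    binaryTetrahedral.relIndex binaryOctahedral = 2 :=
  relIndex_adjoinSqrt _ _ sqrtQi_notMem_binaryTetrahedral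

theorem sqrt_two_smul_eq_one_add_qi_mul (q : sphere (0 : ℍ[ℝ]) 1) :
    √2 • (q : ℍ[ℝ]) = (1 + qi) * (sqrtQi⁻¹ * q : sphere (0 : ℍ[ℝ]) 1) := by
  have hsqrtQi : √2 • (sqrtQi : ℍ[ℝ]) = 1 + qi :=
    smul_inv_smul₀ (Real.sqrt_ne_zero'.2 (zero_lt_two' ℝ)) _
  rw [← hsqrtQi, smul_mul_assoc, ← Metric.unitSphere.coe_mul, mul_inv_cancel_left]

theorem coe_inv_sqrtQi_mul (q : sphere (0 : ℍ[ℝ]) 1) :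
    ((sqrtQi⁻¹ * q : sphere (0 : ℍ[ℝ]) 1) : ℍ[ℝ]) =
      (2⁻¹ : ℝ) • ((1 - qi) * (√2 • (q : ℍ[ℝ]))) := by
  rw [Metric.unitSphere.coe_mul, coe_inv_sqrtQi, smul_mul_assoc, mul_smul_comm, smul_smul,
    ← Real.sqrt_div_self, div_eq_inv_mul]

theorem inv_sqrtQi_mul_mem_binaryTetrahedral_iff {q : sphere (0 : ℍ[ℝ]) 1} :
    sqrtQi⁻¹ * q ∈ binaryTetrahedral ↔ (q : ℍ[ℝ]) ∈ V24' := by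
  have hnorm : ‖(q : ℍ[ℝ])‖ = 1 := norm_eq_of_mem_sphere q
  rw [mem_V24'_iff, and_iff_right hnorm, mem_binaryTetrahedral]
  constructor
  · intro hq
    rw [sqrt_two_smul_eq_one_add_qi_mul]
    exact one_add_qi_mul_mem_lipschitzLattice hq
  · intro hq
    rw [coe_inv_sqrtQi_mul]
    exact half_smul_one_sub_qi_mul_mem_hurwitzOrder hq (normSq_sqrt_two_smul hnorm)

theorem image_coe_binaryOctahedral :
    ((↑) : sphere (0 : ℍ[ℝ]) 1 → ℍ[ℝ]) '' binaryOctahedral = V24 ∪ V24' := by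
  have hunion : (binaryOctahedral : Set (sphere (0 : ℍ[ℝ]) 1)) =
      (binaryTetrahedral : Set (sphere (0 : ℍ[ℝ]) 1)) ∪ (fun q ↦ (q : ℍ[ℝ])) ⁻¹' V24' :=
    Set.ext fun _ ↦ (mem_adjoinSqrt _ _).trans
      (or_congr_right inv_sqrtQi_mul_mem_binaryTetrahedral_iff)
  rw [hunion, Set.image_union, image_coe_binaryTetrahedral, Subtype.image_preimage_coe,
    Set.inter_eq_right.2 fun q hq ↦ mem_sphere_zero_iff_norm.2 (mem_V24'_iff.1 hq).1]

theorem card_binaryTetrahedral : Nat.card binaryTetrahedral = 24 := by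
  rw [← ncard_V24, ← image_coe_binaryTetrahedral,
    Set.ncard_image_of_injective _ Subtype.val_injective]
  rfl

theorem card_binaryOctahedral : Nat.card binaryOctahedral = 48 := by
  rw [← Subgroup.relIndex_bot_left, ← Subgroup.relIndex_mul_relIndex ⊥ binaryTetrahedral _ bot_le
    binaryTetrahedral_le_binaryOctahedral, Subgroup.relIndex_bot_left, card_binaryTetrahedral,
    relIndex_binaryTetrahedral_binaryOctahedral]

theorem stmt_5 :
    (1 : ℍ[ℝ]) ∈ V24 ∪ V24' ∧
    (∀ p ∈ V24 ∪ V24', ∀ q ∈ V24 ∪ V24', p * q ∈ V24 ∪ V24') ∧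
    (∀ q ∈ V24 ∪ V24', q⁻¹ ∈ V24 ∪ V24') ∧
    (∀ q ∈ V24 ∪ V24', ‖q‖ = 1) ∧
    (V24 ∪ V24').ncard = 48 ∧ V24.ncard = 24 ∧
    (∀ g ∈ V24 ∪ V24', ∀ q ∈ V24, g * q * g⁻¹ ∈ V24) ∧
    (∀ g ∈ V24 ∪ V24', g ∉ V24 → V24 ∪ V24' = V24 ∪ (fun q => g * q) '' V24) := by
  have coe_injective : Function.Injective ((↑) : sphere (0 : ℍ[ℝ]) 1 → ℍ[ℝ]) :=
    Subtype.val_injective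
  rw [← image_coe_binaryOctahedral, ← image_coe_binaryTetrahedral]
  simp only [Set.forall_mem_image, SetLike.mem_coe]
  refine ⟨⟨1, one_mem _, rfl⟩, fun p hp q hq ↦ ⟨p * q, mul_mem hp hq, rfl⟩,
    fun q hq ↦ ⟨q⁻¹, inv_mem hq, rfl⟩, fun q _ ↦ norm_eq_of_mem_sphere q, ?_, ?_, ?_, ?_⟩
  · exact (Set.ncard_image_of_injective _ coe_injective).trans card_binaryOctahedral
  · exact (Set.ncard_image_of_injective _ coe_injective).trans card_binaryTetrahedral
  · exact fun g hg q hq ↦ ⟨g * q * g⁻¹, conj_mem_of_relIndex_eq_two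
      binaryTetrahedral_le_binaryOctahedral relIndex_binaryTetrahedral_binaryOctahedral hg hq, rfl⟩
  · intro g hg hgT
    rw [coe_injective.mem_set_image] at hgT
    rw [coe_eq_union_smul_of_relIndex_eq_two binaryTetrahedral_le_binaryOctahedral
      relIndex_binaryTetrahedral_binaryOctahedral hg hgT, Set.image_union, ← Set.image_smul,
      Set.image_image, Set.image_image]
    rfl

end
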